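/- Suppose that for each degree d ∈ ℕ, P_d is a d-feasible polynomial that minimizes the objective, i.e., ∫_B P_d dvol ≤ ∫_B Q dvol for every d-feasible polynomial Q. Then ∫_B |P_d(x) − 𝟙_K(x)| dvol(x) → 0 as d → ∞, where 𝟙_K denotes the indicator function of K. -/

import Mathlib

open MeasureTheory MvPolynomial Filter

/-- A real polynomial `P` in `n` variables is `d`-feasible (w.r.t. `B`, `K`) if its total
degree is at most `d`, `P ≥ 0` on `B` and `P ≥ 1` on `K`. -/
def Feasible {n : ℕ} (B K : Set (Fin n → ℝ)) (d : ℕ) (P : MvPolynomial (Fin n) ℝ) : Prop :=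
  P.totalDegree ≤ d ∧ (∀ x ∈ B, 0 ≤ eval x P) ∧ (∀ x ∈ K, 1 ≤ eval x P)

/-!
A feasible polynomial dominates the indicator of `K` on `B`, so its `L¹` distance to that indicator
is the objective value minus the measure of `K ∩ B`. It therefore suffices to find feasible
polynomials whose objective value is arbitrarily close to that measure: take a thickened indicator
of `K`, whose integral is close to the measure because `K` is closed, and approximate it uniformly
from above by a polynomial, using the Stone–Weierstrass theorem on the compact set `B ∪ K`.
-/

section PolynomialApproximation

/-- Evaluation of polynomials as an algebra homomorphism into the continuous functions on `R^σ`.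
Its range is the algebra of polynomial functions, to which Stone–Weierstrass is applied. -/
noncomputable def mvPolynomialToContinuousMap (σ R : Type*) [CommSemiring R] [TopologicalSpace R]
    [IsTopologicalSemiring R] : MvPolynomial σ R →ₐ[R] C(σ → R, R) where
  toFun p := ⟨fun x => eval x p, continuous_eval p⟩
  map_one' := by ext; simp
  map_mul' p q := by ext; simp
  map_zero' := by ext; simp
  map_add' p q := by ext; simp
  commutes' r := by ext; simp

theorem separatesPoints_range_mvPolynomialToContinuousMap (σ R : Type*) [CommSemiring R]
    [TopologicalSpace R] [IsTopologicalSemiring R] :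
    (mvPolynomialToContinuousMap σ R).range.SeparatesPoints := by
  intro x y hxy
  obtain ⟨i, hi⟩ := Function.ne_iff.mp hxy
  refine ⟨_, ⟨_, ⟨X i, rfl⟩, rfl⟩, ?_⟩
  simpa [mvPolynomialToContinuousMap] using hi

variable {σ : Type*}

theorem exists_mvPolynomial_abs_eval_sub_lt {S : Set (σ → ℝ)} (hS : IsCompact S)
    (f : C(σ → ℝ, ℝ)) {ε : ℝ} (hε : 0 < ε) :
    ∃ p : MvPolynomial σ ℝ, ∀ x ∈ S, |eval x p - f x| < ε := by
  obtain ⟨-, ⟨p, rfl⟩, hp⟩ :=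
    ContinuousMap.exists_mem_subalgebra_near_continuous_of_isCompact_of_separatesPoints
      (separatesPoints_range_mvPolynomialToContinuousMap σ ℝ) f hS hε
  exact ⟨p, hp⟩

theorem exists_mvPolynomial_le_eval_le_add {S : Set (σ → ℝ)} (hS : IsCompact S)
    (f : C(σ → ℝ, ℝ)) {ε : ℝ} (hε : 0 < ε) :
    ∃ p : MvPolynomial σ ℝ, ∀ x ∈ S, f x ≤ eval x p ∧ eval x p ≤ f x + ε := by
  obtain ⟨p, hp⟩ := exists_mvPolynomial_abs_eval_sub_lt hS f (half_pos hε)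
  refine ⟨p + C (ε / 2), fun x hx => ?_⟩
  have hpx := abs_lt.mp (hp x hx)
  rw [map_add, eval_C]
  constructor <;> linarith

variable [Countable σ] {μ : Measure (σ → ℝ)} [IsFiniteMeasureOnCompacts μ]

theorem integrableOn_eval_mvPolynomial {B : Set (σ → ℝ)} (hB : IsCompact B)
    (p : MvPolynomial σ ℝ) : IntegrableOn (fun x => eval x p) B μ :=
  (continuous_eval p).continuousOn.integrableOn_compact hB

theorem exists_mvPolynomial_ge_setIntegral_lt_add {B S : Set (σ → ℝ)} (hB : IsCompact B)
    (hS : IsCompact S) (hBS : B ⊆ S) (f : C(σ → ℝ, ℝ)) {ε : ℝ} (hε : 0 < ε) :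
    ∃ p : MvPolynomial σ ℝ, (∀ x ∈ S, f x ≤ eval x p) ∧
      ∫ x in B, eval x p ∂μ < (∫ x in B, f x ∂μ) + ε := by
  obtain ⟨δ, hδ, hδε⟩ := exists_pos_mul_lt hε (μ.real B)
  obtain ⟨p, hp⟩ := exists_mvPolynomial_le_eval_le_add hS f hδ
  have hf : IntegrableOn f B μ := f.continuous.continuousOn.integrableOn_compact hB
  have hδ_int : IntegrableOn (fun _ => δ) B μ := integrableOn_const hB.measure_ne_top
  refine ⟨p, fun x hx => (hp x hx).1, ?_⟩
  calc ∫ x in B, eval x p ∂μ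
      ≤ ∫ x in B, (f x + δ) ∂μ :=
        setIntegral_mono_on (integrableOn_eval_mvPolynomial hB p) (hf.add hδ_int)
          hB.measurableSet fun x hx => (hp x (hBS hx)).2
    _ = (∫ x in B, f x ∂μ) + μ.real B * δ := by
        rw [integral_add hf hδ_int, setIntegral_const, smul_eq_mul]
    _ < (∫ x in B, f x ∂μ) + ε := by gcongr

end PolynomialApproximation

theorem exists_continuousMap_indicator_le_integral_lt_add {Ω : Type*} [PseudoEMetricSpace Ω]
    [MeasurableSpace Ω] [OpensMeasurableSpace Ω] (μ : Measure Ω) [IsFiniteMeasure μ] {F : Set Ω}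
    (hF : IsClosed F) {ε : ℝ} (hε : 0 < ε) :
    ∃ f : C(Ω, ℝ), (∀ x, F.indicator (fun _ => (1 : ℝ)) x ≤ f x) ∧
      ∫ x, f x ∂μ < μ.real F + ε := by
  have hlim := tendsto_integral_thickenedIndicator_of_isClosed μ hF
    (δs := fun m : ℕ => (1 : ℝ) / (m + 1)) (fun _ => Nat.one_div_pos_of_nat)
    tendsto_one_div_add_atTop_nhds_zero_nat
  obtain ⟨m, hm⟩ := (hlim.eventually_lt_const (lt_add_of_pos_right _ hε)).exists
  refine ⟨⟨fun x => thickenedIndicator Nat.one_div_pos_of_nat F x, by fun_prop⟩,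
    fun x => Set.indicator_le' (fun y hy => ?_) (fun y _ => NNReal.coe_nonneg _) x, hm⟩
  exact_mod_cast one_le_thickenedIndicator_apply Ω Nat.one_div_pos_of_nat hy

section Feasible

variable {n : ℕ} {B K : Set (Fin n → ℝ)} {d : ℕ} {P : MvPolynomial (Fin n) ℝ}

theorem Feasible.mono {d' : ℕ} (hP : Feasible B K d P) (hd : d ≤ d') : Feasible B K d' P :=
  ⟨hP.1.trans hd, hP.2⟩

theorem Feasible.of_indicator_le
    (hP : ∀ x ∈ B ∪ K, K.indicator (fun _ => (1 : ℝ)) x ≤ eval x P) :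
    Feasible B K P.totalDegree P := by
  refine ⟨le_rfl, fun x hx => ?_, fun x hx => ?_⟩
  · exact (Set.indicator_nonneg (fun _ _ => zero_le_one) x).trans (hP x (.inl hx))
  · simpa only [Set.indicator_of_mem hx] using hP x (.inr hx)

theorem Feasible.indicator_le (hP : Feasible B K d P) {x : Fin n → ℝ} (hx : x ∈ B) :
    K.indicator (fun _ => (1 : ℝ)) x ≤ eval x P :=
  Set.indicator_apply_le' (hP.2.2 x) fun _ => hP.2.1 x hx

variable {μ : Measure (Fin n → ℝ)} [IsFiniteMeasureOnCompacts μ]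

theorem Feasible.setIntegral_abs_sub_indicator (hP : Feasible B K d P) (hB : IsCompact B)
    (hK : MeasurableSet K) :
    ∫ x in B, |eval x P - K.indicator (fun _ => (1 : ℝ)) x| ∂μ =
      (∫ x in B, eval x P ∂μ) - μ.real (K ∩ B) := by
  have hK_int : IntegrableOn (K.indicator fun _ => (1 : ℝ)) B μ :=
    (integrableOn_const hB.measure_ne_top).indicator hK
  calc ∫ x in B, |eval x P - K.indicator (fun _ => (1 : ℝ)) x| ∂μ
      = ∫ x in B, (eval x P - K.indicator (fun _ => (1 : ℝ)) x) ∂μ :=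
        setIntegral_congr_fun hB.measurableSet fun x hx =>
          abs_of_nonneg (sub_nonneg.mpr (hP.indicator_le hx))
    _ = (∫ x in B, eval x P ∂μ) - μ.real (K ∩ B) := by
        rw [integral_sub (integrableOn_eval_mvPolynomial hB P) hK_int,
          integral_indicator_const _ hK, measureReal_restrict_apply hK, smul_eq_mul, mul_one]

theorem exists_feasible_setIntegral_lt_add (hB : IsCompact B) (hK : IsCompact K) {ε : ℝ}
    (hε : 0 < ε) :
    ∃ d, ∃ Q : MvPolynomial (Fin n) ℝ, Feasible B K d Q ∧
      ∫ x in B, eval x Q ∂μ < μ.real (K ∩ B) + ε := by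
  have : IsFiniteMeasure (μ.restrict B) := isFiniteMeasure_restrict.mpr hB.measure_ne_top
  obtain ⟨f, hf_ge, hf_int⟩ := exists_continuousMap_indicator_le_integral_lt_add (μ.restrict B)
    hK.isClosed (half_pos hε)
  obtain ⟨Q, hQ_ge, hQ_int⟩ := exists_mvPolynomial_ge_setIntegral_lt_add (μ := μ) hB (hB.union hK)
    Set.subset_union_left f (half_pos hε)
  rw [measureReal_restrict_apply hK.measurableSet] at hf_int
  exact ⟨_, Q, .of_indicator_le fun x hx => (hf_ge x).trans (hQ_ge x hx), by linarith⟩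

theorem stmt_1_general (hB : IsCompact B) (hK : IsCompact K) (P : ℕ → MvPolynomial (Fin n) ℝ)
    (hfeas : ∀ d, Feasible B K d (P d))
    (hmin : ∀ d, ∀ Q : MvPolynomial (Fin n) ℝ, Feasible B K d Q →
      ∫ x in B, eval x (P d) ∂μ ≤ ∫ x in B, eval x Q ∂μ) :
    Tendsto (fun d => ∫ x in B, |eval x (P d) - K.indicator (fun _ => (1 : ℝ)) x| ∂μ)
      atTop (nhds 0) := by
  refine tendsto_order.mpr ⟨fun a ha => .of_forall fun d =>
    ha.trans_le (integral_nonneg fun _ => abs_nonneg _), fun ε hε => ?_⟩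
  obtain ⟨d₀, Q, hQ, hQ_int⟩ := exists_feasible_setIntegral_lt_add (μ := μ) hB hK hε
  filter_upwards [eventually_ge_atTop d₀] with d hd
  rw [(hfeas d).setIntegral_abs_sub_indicator hB hK.measurableSet, sub_lt_iff_lt_add']
  exact (hmin d Q (hQ.mono hd)).trans_lt hQ_int

end Feasible

theorem stmt_1 {n : ℕ} (B K : Set (Fin n → ℝ)) (hB : IsCompact B) (hK : IsClosed K)
    (hKB : K ⊆ B) (P : ℕ → MvPolynomial (Fin n) ℝ)
    (hfeas : ∀ d, Feasible B K d (P d))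
    (hmin : ∀ d, ∀ Q : MvPolynomial (Fin n) ℝ, Feasible B K d Q →
      ∫ x in B, eval x (P d) ≤ ∫ x in B, eval x Q) :
    Tendsto (fun d => ∫ x in B, |eval x (P d) - K.indicator (fun _ => (1 : ℝ)) x|)
      atTop (nhds 0) :=
  stmt_1_general hB (hB.of_isClosed_subset hK hKB) P hfeas hmin
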